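/- Let m ≥ 5 be an integer with gcd(m,3) = 1, and for a positive integer x let U_m(x) denote the set of positive integers not exceeding x which are divisible by m and not divisible by 3. Then there exists x_0 such that for all integers x ≥ x_0, ∑_{n ∈ U_m(x)} (−1)^{s(n)} < 0. -/

import Mathlib

open Finset Filter Topology

noncomputable section

/-- `s n` is the number of 1's in the binary expansion of `n`. -/
def s (n : ℕ) : ℕ := (Nat.digits 2 n).count 1

/-- `S m x = ∑_{0 ≤ n < x, m ∣ n} (-1)^(s n)`. -/
def S (m x : ℕ) : ℝ := ∑ n ∈ Finset.range x, if m ∣ n then (-1 : ℝ) ^ (s n) else 0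

/-- `F α N = ∑_{n=0}^{N-1} e^{2πi(αn + s(n)/2)}`. -/
def F (α : ℝ) (N : ℕ) : ℂ :=
  ∑ n ∈ Finset.range N, Complex.exp (2 * Real.pi * Complex.I * ((α : ℂ) * n + (s n : ℂ) / 2))

/-- `bsq m = b_m ^ 2`, defined by cases on `m mod 3`. -/
def bsq (m : ℕ) : ℝ :=
  if m % 3 = 0 then
    Real.sin (Real.pi / 3 * (1 + 3 / m)) * (Real.sqrt 3 - Real.sin (Real.pi / 3 * (1 + 3 / m)))
  else if m % 3 = 1 then
    Real.sin (Real.pi / 3 * (1 - 1 / m)) * (Real.sqrt 3 - Real.sin (Real.pi / 3 * (1 - 1 / m)))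
  else
    Real.sin (Real.pi / 3 * (1 + 1 / m)) * (Real.sqrt 3 - Real.sin (Real.pi / 3 * (1 + 1 / m)))

/-- `b m` is the positive real number with `(b m)^2 = bsq m`. -/
def b (m : ℕ) : ℝ := Real.sqrt (bsq m)

/-- `lam m = λ_m = 1 + log₂ b_m`. -/
def lam (m : ℕ) : ℝ := 1 + Real.logb 2 (b m)

/-- `mu m = μ_m = (2 b_m + 1)/(2 b_m - 1)`. -/
def mu (m : ℕ) : ℝ := (2 * b m + 1) / (2 * b m - 1)

/-- `U m x`: positive integers `≤ x` divisible by `m` and not by 3. -/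
def U (m x : ℕ) : Finset ℕ := (Finset.Icc 1 x).filter (fun n => m ∣ n ∧ ¬ (3 ∣ n))

/-- `V p n`: positive integers `≤ n` whose least prime divisor is `p`. -/
def V (p n : ℕ) : Finset ℕ := (Finset.Icc 1 n).filter (fun j => Nat.minFac j = p)

theorem s_two_mul (n : ℕ) : s (2 * n) = s n := by
  rcases Nat.eq_zero_or_pos n with rfl | hn
  · rfl
  · rw [s, Nat.digits_def' (by norm_num) (by omega)]
    simp [s]

theorem s_two_mul_add_one (n : ℕ) : s (2 * n + 1) = s n + 1 := by
  rw [s, Nat.digits_def' (by norm_num) (by omega)]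
  have h : (2 * n + 1) / 2 = n := by omega
  simp [s, h]

/-- The exponential sum `∑_{n < N} (-1)^(s n) z^n`. -/
def thueMorseSum (z : ℂ) (N : ℕ) : ℂ := ∑ n ∈ Finset.range N, (-1 : ℂ) ^ s n * z ^ n

theorem thueMorseSum_two_mul (z : ℂ) (N : ℕ) :
    thueMorseSum z (2 * N) = (1 - z) * thueMorseSum (z ^ 2) N := by
  induction N with
  | zero => simp [thueMorseSum]
  | succ N ih =>
    rw [thueMorseSum, show 2 * (N + 1) = 2 * N + 1 + 1 by ring, Finset.sum_range_succ,
      Finset.sum_range_succ, ← thueMorseSum, ih, thueMorseSum, thueMorseSum,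
      Finset.sum_range_succ, s_two_mul, s_two_mul_add_one]
    ring

theorem norm_thueMorseSum_le (z : ℂ) (hz : ‖z‖ = 1) (N : ℕ) :
    ‖thueMorseSum z N‖ ≤ ‖1 - z‖ * ‖thueMorseSum (z ^ 2) (N / 2)‖ + 1 := by
  rw [← norm_mul, ← thueMorseSum_two_mul]
  rcases Nat.even_or_odd' N with ⟨k, rfl | rfl⟩
  · simp
  · rw [show (2 * k + 1) / 2 = k by omega, thueMorseSum, Finset.sum_range_succ, ← thueMorseSum]
    refine (norm_add_le _ _).trans ?_
    simp [hz]

theorem norm_thueMorseSum_one_le (N : ℕ) : ‖thueMorseSum 1 N‖ ≤ 1 := by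
  simpa using norm_thueMorseSum_le 1 (by simp) N

/-- The maximum of `‖1 - z‖² ‖1 - z²‖` on the unit circle is attained only at primitive cube
roots of unity. -/
theorem norm_one_sub_sq_mul_lt (z : ℂ) (hz : ‖z‖ = 1) (h : z ^ 2 + z + 1 ≠ 0) :
    ‖1 - z‖ ^ 2 * ‖1 - z ^ 2‖ < √3 ^ 3 := by
  have hsq : z.re ^ 2 + z.im ^ 2 = 1 := by
    have := Complex.sq_norm z
    rw [hz, Complex.normSq_apply] at this
    linarith
  have h1 : ‖1 - z‖ ^ 2 = 2 - 2 * z.re := by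
    rw [Complex.sq_norm, Complex.normSq_apply]
    simp
    linarith
  have h2 : ‖1 + z‖ ^ 2 = 2 + 2 * z.re := by
    rw [Complex.sq_norm, Complex.normSq_apply]
    simp
    linarith
  have hre : 2 * z.re + 1 ≠ 0 := by
    intro h0
    apply h
    have hre : z.re = -1 / 2 := by linarith
    have him : z.im ^ 2 = 3 / 4 := by rw [hre] at hsq; linarith
    apply Complex.ext
    · simp [pow_two, hre]
      linarith
    · simp [pow_two, hre]
      ring
  have hlo : -1 ≤ z.re := by nlinarith
  have hhi : z.re ≤ 1 := by nlinarith
  refine lt_of_pow_lt_pow_left₀ 2 (by positivity) ?_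
  have h3 : (√3 ^ 3) ^ 2 = 27 := by
    rw [← pow_mul, show 3 * 2 = 2 * 3 by norm_num, pow_mul, Real.sq_sqrt (by norm_num)]
    norm_num
  have h4 : (‖1 - z‖ ^ 2 * ‖1 - z ^ 2‖) ^ 2 = (2 - 2 * z.re) ^ 3 * (2 + 2 * z.re) := by
    rw [show 1 - z ^ 2 = (1 - z) * (1 + z) by ring, norm_mul, ← h1, ← h2]
    ring
  rw [h3, h4]
  have hpos : 0 < (2 * z.re + 1) ^ 2 := by positivity
  have hq : 0 < (2 * z.re - 3) ^ 2 + 2 := by positivity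
  nlinarith [mul_pos hpos hq]

/-- Away from the primitive cube roots of unity, exponential sums at roots of unity of odd order
grow at a rate strictly below `√3` per binary digit. -/
theorem exists_norm_thueMorseSum_le (M : ℕ) (hM : Odd M) :
    ∃ C β : ℝ, 0 ≤ C ∧ 1 < β ∧ β < √3 ∧ ∀ z : ℂ, z ^ M = 1 → z ^ 2 + z + 1 ≠ 0 →
      ∀ L N : ℕ, N < 2 ^ L → ‖thueMorseSum z N‖ ≤ C * β ^ L := by
  set A : Set ℂ := {z | z ^ M = 1 ∧ z ≠ 1 ∧ z ^ 2 + z + 1 ≠ 0}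
  have hM0 : 0 < M := hM.pos
  have hnorm : ∀ z : ℂ, z ^ M = 1 → ‖z‖ = 1 := fun z hz =>
    Complex.norm_eq_one_of_pow_eq_one hz hM0.ne'
  have hfin : A.Finite := by
    refine (Polynomial.nthRootsFinset M (1 : ℂ)).finite_toSet.subset ?_
    intro z hz
    simpa [Polynomial.mem_nthRootsFinset hM0] using hz.1
  have hclosed : ∀ z ∈ A, z ^ 2 ∈ A := by
    rintro z ⟨h1, h2, h3⟩
    have hinj : ∀ y : ℂ, y ^ M = 1 → y ^ 2 = 1 → y = 1 := by
      intro y hy hy2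
      obtain ⟨k, rfl⟩ := hM
      simpa [pow_succ, pow_mul, hy2] using hy
    refine ⟨by rw [← pow_mul, mul_comm, pow_mul, h1, one_pow], fun h => h2 (hinj z h1 h), ?_⟩
    intro h
    have hfac : (z ^ 2 + z + 1) * (z ^ 2 - z + 1) = 0 := by rw [← h]; ring
    rcases mul_eq_zero.1 hfac with h' | h'
    · exact h3 h'
    · have hcube : z ^ 3 = -1 := by linear_combination (z + 1) * h'
      have hone : z ^ 3 = 1 := hinj _ (by rw [← pow_mul, mul_comm, pow_mul, h1, one_pow])
        (by rw [hcube]; norm_num)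
      rw [hone] at hcube
      norm_num at hcube
  obtain ⟨β, hβ3, hβ1, hβ⟩ : ∃ β : ℝ, β < √3 ∧ 1 < β ∧
      ∀ z ∈ A, ‖1 - z‖ ^ 2 * ‖1 - z ^ 2‖ < β ^ 3 := by
    have hev : ∀ᶠ β : ℝ in 𝓝[<] √3, 1 < β ∧ ∀ z ∈ A, ‖1 - z‖ ^ 2 * ‖1 - z ^ 2‖ < β ^ 3 := by
      apply Filter.Eventually.filter_mono nhdsWithin_le_nhds
      refine (eventually_gt_nhds (Real.lt_sqrt_of_sq_lt (by norm_num))).and ?_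
      rw [Filter.eventually_all_finite hfin]
      intro z hz
      exact (continuous_pow 3).continuousAt.eventually_const_lt
        (norm_one_sub_sq_mul_lt z (hnorm z hz.1) hz.2.2)
    obtain ⟨β, h, hlt⟩ := (hev.and self_mem_nhdsWithin).exists
    exact ⟨β, hlt, h⟩
  set w : ℂ → ℝ := fun z => ‖1 - z‖ ^ (1 / 3 : ℝ) with hw
  have hw0 : ∀ z, 0 ≤ w z := fun z => by positivity
  have hw3 : ∀ z, w z ^ 3 = ‖1 - z‖ := fun z => by
    rw [hw, ← Real.rpow_natCast, ← Real.rpow_mul (norm_nonneg _)]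
    norm_num
  have hstep : ∀ z ∈ A, ‖1 - z‖ * w (z ^ 2) ≤ β * w z := by
    intro z hz
    refine le_of_pow_le_pow_left₀ (n := 3) (by norm_num) (by have := hw0 z; positivity) ?_
    rw [mul_pow, mul_pow, hw3, hw3]
    nlinarith [mul_le_mul_of_nonneg_right (hβ z hz).le (norm_nonneg (1 - z))]
  obtain ⟨δ, hδ0, hδ⟩ : ∃ δ : ℝ, 0 < δ ∧ ∀ z ∈ A, δ < w z := by
    have hev : ∀ᶠ δ : ℝ in 𝓝[>] 0, ∀ z ∈ A, δ < w z := by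
      apply Filter.Eventually.filter_mono nhdsWithin_le_nhds
      rw [Filter.eventually_all_finite hfin]
      intro z hz
      exact eventually_lt_nhds (Real.rpow_pos_of_pos (norm_pos_iff.2 (sub_ne_zero.2 hz.2.1.symm)) _)
    obtain ⟨δ, h, hlt⟩ := (hev.and self_mem_nhdsWithin).exists
    exact ⟨δ, hlt, h⟩
  -- The weighted bound `K * β ^ L - K` absorbs the unit error made at each digit.
  set K : ℝ := 1 / (δ * (β - 1)) with hK
  have hβ0 : 0 < β - 1 := by linarith
  have hK0 : 0 < K := by positivity
  have hKδ : K * (β - 1) * δ = 1 := by rw [hK]; field_simp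
  have hbound : ∀ L : ℕ, ∀ z ∈ A, ∀ N : ℕ, N < 2 ^ L →
      ‖thueMorseSum z N‖ ≤ w z * (K * (β ^ L - 1)) := by
    intro L
    induction L with
    | zero =>
      intro z _ N hN
      obtain rfl : N = 0 := by simpa using hN
      simp [thueMorseSum]
    | succ L ih =>
      intro z hz N hN
      have h1 := norm_thueMorseSum_le z (hnorm z hz.1) N
      have h2 := ih (z ^ 2) (hclosed z hz) (N / 2) (by rw [pow_succ] at hN; omega)
      have hL : 0 ≤ K * (β ^ L - 1) :=
        mul_nonneg hK0.le (sub_nonneg.2 (one_le_pow₀ hβ1.le))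
      have h3 := mul_le_mul_of_nonneg_left h2 (norm_nonneg (1 - z))
      have h4 := mul_le_mul_of_nonneg_right (hstep z hz) hL
      have h5 : 1 ≤ K * (β - 1) * w z :=
        hKδ.symm.le.trans (mul_le_mul_of_nonneg_left (hδ z hz).le (mul_pos hK0 hβ0).le)
      rw [pow_succ]
      linarith
  have hw2 : ∀ z ∈ A, w z ≤ 2 := by
    intro z hz
    refine le_of_pow_le_pow_left₀ (n := 3) (by norm_num) (by norm_num) ?_
    rw [hw3]
    refine (norm_sub_le _ _).trans ?_
    rw [hnorm z hz.1]
    norm_num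
  refine ⟨2 * K + 1, β, by positivity, hβ1, hβ3, fun z hz hz3 L N hN => ?_⟩
  have hβL : 1 ≤ β ^ L := one_le_pow₀ hβ1.le
  by_cases hz1 : z = 1
  · subst hz1
    refine (norm_thueMorseSum_one_le N).trans ?_
    nlinarith
  · have hzA : z ∈ A := ⟨hz, hz1, hz3⟩
    refine (hbound L z hzA N hN).trans ?_
    have := mul_le_mul_of_nonneg_right (hw2 z hzA)
      (mul_nonneg hK0.le (sub_nonneg.2 hβL))
    nlinarith

/-- The values of `ω ^ n + ω ^ (2 * n)` for a primitive cube root of unity `ω`. -/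
def cubicTrace (n : ℕ) : ℤ := if n % 3 = 0 then 2 else -1

/-- The part of the Thue-Morse sum that comes from the primitive cube roots of unity. -/
def cubicSum (N : ℕ) : ℤ := ∑ n ∈ Finset.range N, (-1 : ℤ) ^ s n * cubicTrace n

theorem cubicTrace_add_add (n : ℕ) :
    cubicTrace n + cubicTrace (n + 1) + cubicTrace (n + 2) = 0 := by
  obtain h | h | h : n % 3 = 0 ∨ n % 3 = 1 ∨ n % 3 = 2 := by omega
  all_goals simp [cubicTrace, Nat.add_mod, h]

theorem cubicTrace_four_mul (n : ℕ) : cubicTrace (4 * n) = cubicTrace n := by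
  simp only [cubicTrace, show 4 * n % 3 = n % 3 by omega]

theorem neg_one_le_cubicTrace (n : ℕ) : -1 ≤ cubicTrace n := by
  unfold cubicTrace
  split_ifs <;> norm_num

theorem cubicTrace_le_two (n : ℕ) : cubicTrace n ≤ 2 := by
  unfold cubicTrace
  split_ifs <;> norm_num

theorem s_four_mul (n : ℕ) : s (4 * n) = s n := by
  rw [show 4 * n = 2 * (2 * n) by ring, s_two_mul, s_two_mul]

theorem s_four_mul_add_one (n : ℕ) : s (4 * n + 1) = s n + 1 := by
  rw [show 4 * n + 1 = 2 * (2 * n) + 1 by ring, s_two_mul_add_one, s_two_mul]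

theorem s_four_mul_add_two (n : ℕ) : s (4 * n + 2) = s n + 1 := by
  rw [show 4 * n + 2 = 2 * (2 * n + 1) by ring, s_two_mul, s_two_mul_add_one]

theorem s_four_mul_add_three (n : ℕ) : s (4 * n + 3) = s n + 2 := by
  rw [show 4 * n + 3 = 2 * (2 * n + 1) + 1 by ring, s_two_mul_add_one, s_two_mul_add_one]

theorem cubicSum_four_mul (N : ℕ) : cubicSum (4 * N) = 3 * cubicSum N := by
  induction N with
  | zero => simp [cubicSum]
  | succ N ih =>
    have h1 := cubicTrace_add_add (4 * N)
    have h2 := cubicTrace_add_add (4 * N + 1)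
    have h3 := cubicTrace_four_mul N
    rw [cubicSum, show 4 * (N + 1) = 4 * N + 3 + 1 by ring]
    simp only [Finset.sum_range_succ]
    rw [← cubicSum, ih, cubicSum, cubicSum, Finset.sum_range_succ, s_four_mul,
      s_four_mul_add_one, s_four_mul_add_two, s_four_mul_add_three]
    linear_combination (-1 : ℤ) ^ s N * (h2 - 2 * h1 + 3 * h3)

theorem three_mul_cubicSum_div_four_le (N : ℕ) : 3 * cubicSum (N / 4) - 4 ≤ cubicSum N := by
  set q := N / 4 with hq
  have hN : N = 4 * q ∨ N = 4 * q + 1 ∨ N = 4 * q + 2 ∨ N = 4 * q + 3 := by omega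
  clear_value q
  have hsum := cubicTrace_add_add (4 * q)
  have hlo₀ := neg_one_le_cubicTrace (4 * q)
  have hlo₁ := neg_one_le_cubicTrace (4 * q + 1)
  have hhi₀ := cubicTrace_le_two (4 * q)
  have hhi₁ := cubicTrace_le_two (4 * q + 1)
  rw [← cubicSum_four_mul]
  rcases neg_one_pow_eq_or ℤ (s q) with h | h <;> rcases hN with rfl | rfl | rfl | rfl <;>
    simp only [cubicSum, Finset.sum_range_succ, s_four_mul, s_four_mul_add_one,
      s_four_mul_add_two, pow_succ, h] <;>
    linarith

theorem pow_three_add_two_le_cubicSum (k N : ℕ) (hN : 2 * 4 ^ k ≤ N) :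
    3 ^ k + 2 ≤ cubicSum N := by
  induction k generalizing N with
  | zero =>
    induction N using Nat.strong_induction_on with
    | _ N ih =>
      by_cases h8 : 8 ≤ N
      · have h1 := ih (N / 4) (by omega) (by omega)
        have h2 := three_mul_cubicSum_div_four_le N
        simp only [pow_zero] at h1 ⊢
        omega
      · have h2 : 2 ≤ N := by simpa using hN
        interval_cases N <;> simp [cubicSum, Finset.sum_range_succ, s, cubicTrace]
  | succ k ih =>
    have h1 := ih (N / 4) (by rw [pow_succ] at hN; omega)
    have h2 := three_mul_cubicSum_div_four_le N
    rw [pow_succ]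
    omega

theorem thueMorseSum_cube_roots (ω : ℂ) (hω : ω ^ 2 + ω + 1 = 0) (N : ℕ) :
    thueMorseSum ω N + thueMorseSum (ω ^ 2) N = cubicSum N := by
  have h3 : ω ^ 3 = 1 := by linear_combination (ω - 1) * hω
  have htrace : ∀ n : ℕ, ω ^ n + (ω ^ 2) ^ n = cubicTrace n := by
    intro n
    obtain ⟨q, r, hr, rfl⟩ : ∃ q r, r < 3 ∧ n = 3 * q + r :=
      ⟨n / 3, n % 3, Nat.mod_lt _ (by norm_num), (Nat.div_add_mod n 3).symm⟩
    have h6 : (ω ^ 2) ^ 3 = 1 := by rw [← pow_mul, mul_comm, pow_mul, h3, one_pow]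
    rw [pow_add, pow_add, pow_mul, pow_mul, h3, h6, one_pow]
    interval_cases r
    · simp [cubicTrace]
      norm_num
    · simp [cubicTrace]
      linear_combination hω
    · simp [cubicTrace]
      linear_combination hω + ω * h3
  rw [thueMorseSum, thueMorseSum, cubicSum, ← Finset.sum_add_distrib]
  push_cast
  refine Finset.sum_congr rfl fun n _ => ?_
  rw [← htrace]
  ring

theorem sum_pow_root_of_unity (M : ℕ) (ζ : ℂ) (hζ : IsPrimitiveRoot ζ M) (n : ℕ) :
    ∑ k ∈ Finset.range M, (ζ ^ k) ^ n = if M ∣ n then (M : ℂ) else 0 := by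
  simp_rw [← pow_mul, mul_comm _ n, pow_mul]
  split_ifs with h
  · simp [(hζ.pow_eq_one_iff_dvd n).2 h]
  · have h1 : ζ ^ n ≠ 1 := fun h' => h ((hζ.pow_eq_one_iff_dvd n).1 h')
    rw [geom_sum_eq h1, ← pow_mul, mul_comm, pow_mul, hζ.pow_eq_one]
    simp

theorem sum_thueMorseSum (M : ℕ) (ζ : ℂ) (hζ : IsPrimitiveRoot ζ M) (N : ℕ) :
    ∑ k ∈ Finset.range M, thueMorseSum (ζ ^ k) N = ((M * S M N : ℝ) : ℂ) := by
  simp only [thueMorseSum]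
  rw [Finset.sum_comm, S, Finset.mul_sum]
  push_cast
  refine Finset.sum_congr rfl fun n _ => ?_
  rw [← Finset.mul_sum, sum_pow_root_of_unity M ζ hζ]
  split_ifs <;> simp [mul_comm]

theorem sum_U_eq_S_sub_S (m x : ℕ) (hm : Nat.Coprime m 3) :
    ∑ n ∈ U m x, (-1 : ℝ) ^ s n = S m (x + 1) - S (3 * m) (x + 1) := by
  rw [S, S, ← Finset.sum_sub_distrib, U, Finset.sum_filter, Finset.range_eq_Ico,
    Finset.sum_eq_sum_Ico_succ_bot (by omega)]
  simp only [dvd_zero, if_true, sub_self, zero_add]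
  refine Finset.sum_congr (by ext; simp) fun n _ => ?_
  have h : 3 * m ∣ n ↔ m ∣ n ∧ 3 ∣ n :=
    ⟨fun h => ⟨dvd_of_mul_left_dvd h, dvd_of_mul_right_dvd h⟩,
      fun h => hm.symm.mul_dvd_of_dvd_of_dvd h.2 h.1⟩
  simp only [h]
  by_cases h1 : m ∣ n <;> by_cases h2 : 3 ∣ n <;> simp [h1, h2]

/-- Isolating the primitive cube roots of unity in `S m - S (3 * m)`. -/
theorem exists_S_sub_S_le (m : ℕ) (hodd : Odd m) (hm : Nat.Coprime m 3) :
    ∃ C β : ℝ, 0 ≤ C ∧ 1 < β ∧ β < √3 ∧ ∀ L N : ℕ, N < 2 ^ L →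
      3 * m * (S m N - S (3 * m) N) ≤ C * β ^ L - cubicSum N := by
  have hm0 : 0 < m := hodd.pos
  obtain ⟨C, β, hC, hβ1, hβ3, hbound⟩ :=
    exists_norm_thueMorseSum_le (3 * m) (Odd.mul (by decide) hodd)
  refine ⟨6 * m * C, β, by positivity, hβ1, hβ3, fun L N hN => ?_⟩
  have hζ := Complex.isPrimitiveRoot_exp (3 * m) (by omega)
  set ζ := Complex.exp (2 * Real.pi * Complex.I / (3 * m : ℕ))
  have hω : IsPrimitiveRoot (ζ ^ m) 3 := hζ.pow (by omega) (by ring)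
  have hζ3 : IsPrimitiveRoot (ζ ^ 3) m := hζ.pow (by omega) rfl
  have hω0 : (ζ ^ m) ^ 2 + ζ ^ m + 1 = 0 := by
    have := hω.geom_sum_eq_zero (by norm_num)
    simp only [Finset.sum_range_succ, Finset.sum_range_zero] at this
    linear_combination this
  have hzM : ∀ k, (ζ ^ k) ^ (3 * m) = 1 := fun k => by
    rw [← pow_mul, mul_comm, pow_mul, hζ.pow_eq_one, one_pow]
  have hcube : ∀ k, (ζ ^ k) ^ 2 + ζ ^ k + 1 = 0 → m ∣ k ∧ ¬ 3 * m ∣ k := by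
    intro k hk
    have h1 : ζ ^ (k * 3) = 1 := by
      rw [pow_mul]
      linear_combination (ζ ^ k - 1) * hk
    refine ⟨?_, fun h => ?_⟩
    · have := (hζ.pow_eq_one_iff_dvd _).1 h1
      rw [mul_comm] at this
      exact Nat.dvd_of_mul_dvd_mul_right (by norm_num) this
    · rw [(hζ.pow_eq_one_iff_dvd k).2 h] at hk
      norm_num at hk
  set R := ((Finset.range (3 * m)).erase m).erase (2 * m) with hR
  have hRbound : ∀ k ∈ R, ‖thueMorseSum (ζ ^ k) N‖ ≤ C * β ^ L := by
    intro k hk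
    simp only [hR, Finset.mem_erase, Finset.mem_range] at hk
    refine hbound _ (hzM k) (fun h => ?_) L N hN
    obtain ⟨⟨q, rfl⟩, hq⟩ := hcube k h
    have hq3 : q < 3 := by nlinarith [hk.2.2]
    interval_cases q
    · simp at hq
    · simp at hk
    · exact hk.1 (by ring)
  have hmbound : ∀ k ∈ Finset.range m, ‖thueMorseSum ((ζ ^ 3) ^ k) N‖ ≤ C * β ^ L := by
    intro k _
    rw [← pow_mul]
    refine hbound _ (hzM _) (fun h => ?_) L N hN
    obtain ⟨h1, h2⟩ := hcube _ h
    exact h2 (Nat.mul_dvd_mul_left 3 (hm.dvd_of_dvd_mul_left h1))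
  have hsplit : ∑ k ∈ Finset.range (3 * m), thueMorseSum (ζ ^ k) N =
      cubicSum N + ∑ k ∈ R, thueMorseSum (ζ ^ k) N := by
    rw [← thueMorseSum_cube_roots _ hω0 N, ← pow_mul, mul_comm m 2,
      ← Finset.add_sum_erase _ _ (show m ∈ Finset.range (3 * m) by simp; omega),
      ← Finset.add_sum_erase _ _
        (show 2 * m ∈ (Finset.range (3 * m)).erase m by simp; omega)]
    ring
  have hsum3 := sum_thueMorseSum (3 * m) ζ hζ N
  have hsum1 := sum_thueMorseSum m (ζ ^ 3) hζ3 N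
  have hkey : ((3 * m * (S m N - S (3 * m) N) + cubicSum N : ℝ) : ℂ) =
      3 * ∑ k ∈ Finset.range m, thueMorseSum ((ζ ^ 3) ^ k) N
        - ∑ k ∈ R, thueMorseSum (ζ ^ k) N := by
    rw [hsum1]
    rw [hsplit] at hsum3
    push_cast at hsum3 ⊢
    linear_combination hsum3
  have h1 := norm_sum_le_of_le _ hmbound
  have h2 := norm_sum_le_of_le _ hRbound
  have hRcard : (R.card : ℝ) ≤ 3 * m := by
    have : R.card ≤ 3 * m := by
      simpa using Finset.card_le_card
        ((Finset.erase_subset _ _).trans (Finset.erase_subset m (Finset.range (3 * m))))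
    exact_mod_cast this
  simp only [Finset.sum_const, Finset.card_range, nsmul_eq_mul] at h1 h2
  have hβ0 : 0 ≤ C * β ^ L := mul_nonneg hC (pow_nonneg (by linarith) L)
  have h3 := norm_sub_le (3 * ∑ k ∈ Finset.range m, thueMorseSum ((ζ ^ 3) ^ k) N)
    (∑ k ∈ R, thueMorseSum (ζ ^ k) N)
  rw [← hkey, Complex.norm_real, norm_mul] at h3
  have h4 := (Real.le_norm_self _).trans h3
  have h5 := mul_le_mul_of_nonneg_right hRcard hβ0
  simp only [Complex.norm_ofNat] at h4
  linarith

theorem eventually_sum_U_neg_of_odd (m : ℕ) (hodd : Odd m) (hm : Nat.Coprime m 3) :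
    ∃ x₀ : ℕ, ∀ x : ℕ, x₀ ≤ x → ∑ n ∈ U m x, (-1 : ℝ) ^ s n < 0 := by
  obtain ⟨C, β, hC, hβ1, hβ3, hbound⟩ := exists_S_sub_S_le m hodd hm
  have hβsq : β ^ 2 < 3 := by
    have := pow_lt_pow_left₀ hβ3 (by linarith) (two_ne_zero)
    rwa [Real.sq_sqrt (by norm_num)] at this
  have hlim : Tendsto (fun k : ℕ => C * β ^ 3 * (β ^ 2 / 3) ^ k) atTop (𝓝 0) := by
    simpa using (tendsto_pow_atTop_nhds_zero_of_lt_one (by positivity)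
      ((div_lt_one (by norm_num)).2 hβsq)).const_mul (C * β ^ 3)
  obtain ⟨k₀, hk₀⟩ := Filter.eventually_atTop.1 (hlim.eventually_lt_const one_pos)
  refine ⟨2 * 4 ^ k₀, fun x hx => ?_⟩
  obtain ⟨k, hk, hlo, hhi⟩ : ∃ k, k₀ ≤ k ∧ 2 * 4 ^ k ≤ x + 1 ∧ x + 1 < 2 ^ (2 * k + 3) := by
    have hpos : (x + 1) / 2 ≠ 0 := by have := Nat.one_le_pow k₀ 4 (by norm_num); omega
    refine ⟨Nat.log 4 ((x + 1) / 2), ?_, ?_, ?_⟩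
    · exact Nat.le_log_of_pow_le (by norm_num) (by omega)
    · have := Nat.pow_log_le_self 4 hpos
      omega
    · have := Nat.lt_pow_succ_log_self (b := 4) (by norm_num) ((x + 1) / 2)
      rw [pow_add, pow_mul]
      rw [pow_succ] at this
      norm_num
      omega
  have h1 := hbound _ _ hhi
  have h2 : ((3 : ℝ) ^ k + 2) ≤ cubicSum (x + 1) := by
    exact_mod_cast pow_three_add_two_le_cubicSum k (x + 1) hlo
  have h3 : C * β ^ (2 * k + 3) < 3 ^ k := by
    have := hk₀ k hk
    rw [div_pow, ← mul_div_assoc, div_lt_one (by positivity)] at this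
    calc C * β ^ (2 * k + 3) = C * β ^ 3 * (β ^ 2) ^ k := by ring
      _ < 3 ^ k := this
  rw [sum_U_eq_S_sub_S m x hm]
  have hm0 : (0 : ℝ) < 3 * m := by have := hodd.pos; positivity
  by_contra! hcon
  have := mul_nonneg hm0.le hcon
  linarith

theorem sum_U_two_mul (m x : ℕ) :
    ∑ n ∈ U (2 * m) x, (-1 : ℝ) ^ s n = ∑ n ∈ U m (x / 2), (-1 : ℝ) ^ s n := by
  symm
  refine Finset.sum_bij (fun n _ => 2 * n) ?_ ?_ ?_ ?_
  · intro n hn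
    simp only [U, Finset.mem_filter, Finset.mem_Icc] at hn ⊢
    exact ⟨by omega, Nat.mul_dvd_mul_left 2 hn.2.1, by omega⟩
  · intro a _ b _ h
    omega
  · intro n hn
    simp only [U, Finset.mem_filter, Finset.mem_Icc] at hn
    obtain ⟨q, rfl⟩ := dvd_of_mul_right_dvd hn.2.1
    refine ⟨q, ?_, rfl⟩
    simp only [U, Finset.mem_filter, Finset.mem_Icc]
    exact ⟨by omega, Nat.dvd_of_mul_dvd_mul_left two_pos hn.2.1, by omega⟩
  · intro n _
    rw [s_two_mul]

theorem eventually_sum_U_neg (m : ℕ) (hm : Nat.Coprime m 3) :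
    ∃ x₀ : ℕ, ∀ x : ℕ, x₀ ≤ x → ∑ n ∈ U m x, (-1 : ℝ) ^ s n < 0 := by
  induction m using Nat.strong_induction_on with
  | _ m ih =>
    rcases Nat.even_or_odd' m with ⟨q, rfl | rfl⟩
    · have hq : 0 < q := by
        rcases Nat.eq_zero_or_pos q with rfl | h
        · norm_num at hm
        · exact h
      obtain ⟨x₀, hx₀⟩ := ih q (by omega) (Nat.Coprime.coprime_mul_left hm)
      refine ⟨2 * x₀, fun x hx => ?_⟩
      rw [sum_U_two_mul]
      exact hx₀ _ (by omega)
    · exact eventually_sum_U_neg_of_odd _ (odd_two_mul_add_one q) hm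

theorem stmt_13 (m : ℕ) (hm : 5 ≤ m) (hgcd : Nat.gcd m 3 = 1) :
    ∃ x₀ : ℕ, ∀ x : ℕ, x₀ ≤ x → (∑ n ∈ U m x, (-1 : ℝ) ^ (s n)) < 0 := by
  exact eventually_sum_U_neg m hgcd
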